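/- arXiv:2205.00109 — 2 statements merged into one kernel-verified Lean document; each statement's English description precedes it below -/
import Mathlib

section
/- Suppose t ≥ 1, k > t, n ≥ 2k, and F ⊆ binom([n],k) is a nonempty saturated t-intersecting family. Let B be the family of minimal (under inclusion) members of T_t(F). Then: (i) B is a t-intersecting antichain; (ii) F = {H ∈ binom([n],k) : ∃ B ∈ B, B ⊆ H}. -/
open Finset

def ground (n : ℕ) : Finset ℕ := Finset.Icc 1 n

def ksets (n k : ℕ) : Finset (Finset ℕ) := (ground n).powersetCard k

def starF (n k : ℕ) (T : Finset ℕ) : Finset (Finset ℕ) :=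
  (ksets n k).filter fun S => T ⊆ S

def meet (A B : Finset (Finset ℕ)) : Finset (Finset ℕ) :=
  (A ×ˢ B).image fun p => p.1 ∩ p.2

def dInt (A B : Finset (Finset ℕ)) : Finset (Finset ℕ) :=
  ((A ×ˢ B).filter fun p => p.1 ≠ p.2).image fun p => p.1 ∩ p.2

def crossInt (A B : Finset (Finset ℕ)) : Prop :=
  ∀ F ∈ A, ∀ G ∈ B, (F ∩ G).Nonempty

open Classical in
noncomputable def nu (A : Finset (Finset ℕ)) : ℕ :=
  (A.powerset.filter fun M : Finset (Finset ℕ) =>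
    (↑M : Set (Finset ℕ)).PairwiseDisjoint id).sup Finset.card

def transv (n k : ℕ) (H : Finset (Finset ℕ)) : Finset (Finset ℕ) :=
  (ground n).powerset.filter fun T => T.card ≤ k ∧ ∀ h ∈ H, (T ∩ h).Nonempty

def basis (n k : ℕ) (H : Finset (Finset ℕ)) : Finset (Finset ℕ) :=
  (transv n k H).filter fun b => ∀ b' ∈ transv n k H, b' ⊆ b → b' = b

def tIntersecting (t : ℕ) (A : Finset (Finset ℕ)) : Prop :=
  ∀ F ∈ A, ∀ F' ∈ A, t ≤ (F ∩ F').card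

def ttransv (n k t : ℕ) (H : Finset (Finset ℕ)) : Finset (Finset ℕ) :=
  (ground n).powerset.filter fun T => T.card ≤ k ∧ ∀ h ∈ H, t ≤ (T ∩ h).card

def tbasis (n k t : ℕ) (H : Finset (Finset ℕ)) : Finset (Finset ℕ) :=
  (ttransv n k t H).filter fun b => ∀ b' ∈ ttransv n k t H, b' ⊆ b → b' = b

def crossSperner (A B : Finset (Finset ℕ)) : Prop :=
  ∀ a ∈ A, ∀ b ∈ B, ¬ a ⊆ b ∧ ¬ b ⊆ a

def A1 (n k : ℕ) : Finset (Finset ℕ) :=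
  starF n k {1, 2} ∪ starF n k {3, 4} ∪ starF n k {1, 4, 5} ∪ starF n k {2, 3, 6}

def A2 (n k : ℕ) : Finset (Finset ℕ) :=
  starF n k {1, 3} ∪ starF n k {2, 4} ∪ starF n k {1, 4, 6} ∪ starF n k {2, 3, 5}

def Ankt (n k t : ℕ) : Finset (Finset ℕ) :=
  (ksets n k).filter fun A => t + 1 ≤ (A ∩ ground (t + 2)).card

/-!
Every `k`-set containing a `t`-transversal of a saturated family `𝒜` may be added to `𝒜`, hence lies
in `𝒜`; since every transversal contains a minimal one, this gives (ii). For (i), suppose two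
transversals `T` and `T'` meet in fewer than `t` points. If `#T' = k`, then `T' ∈ 𝒜`, which
contradicts that `T` is a transversal. If `#T' < k`, then `2 * k ≤ |V| + t` leaves enough room in
the ground set `V` outside `T'` to extend `T` to a `k`-set that still meets `T'` in fewer than `t`
points; this `k`-set lies in `𝒜`, which contradicts that `T'` is a transversal.
-/

section SetFamily

variable {α : Type*} {V : Set α} {k t : ℕ} {𝒜 : Set (Finset α)} {T T' H : Finset α}

/-- The family of `k`-element subsets of a ground set `V`, which may be infinite. -/
def uniformFamily (V : Set α) (k : ℕ) : Set (Finset α) :=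
  {A | ↑A ⊆ V ∧ #A = k}

variable [DecidableEq α]

/-- A family is `t`-intersecting if any two members share at least `t` elements. Members are also
compared with themselves, so each has at least `t` elements. -/
def IsTIntersecting (t : ℕ) (𝒜 : Set (Finset α)) : Prop :=
  ∀ A ∈ 𝒜, ∀ B ∈ 𝒜, t ≤ #(A ∩ B)

/-- A saturated family: one that is maximal under inclusion among the `t`-intersecting families of
`k`-subsets of `V`. -/
def IsSaturated (V : Set α) (k t : ℕ) (𝒜 : Set (Finset α)) : Prop :=
  Maximal (fun ℬ ↦ ℬ ⊆ uniformFamily V k ∧ IsTIntersecting t ℬ) 𝒜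

/-- The family `T_t(𝒜)` of `t`-transversals of `𝒜`: the sets of at most `k` elements of `V` that
meet every member of `𝒜` in at least `t` elements. -/
def transversals (V : Set α) (k t : ℕ) (𝒜 : Set (Finset α)) : Set (Finset α) :=
  {T | ↑T ⊆ V ∧ #T ≤ k ∧ ∀ A ∈ 𝒜, t ≤ #(T ∩ A)}

/-- The family of inclusion-minimal `t`-transversals of `𝒜`. -/
def minimalTransversals (V : Set α) (k t : ℕ) (𝒜 : Set (Finset α)) : Set (Finset α) :=
  {T | Minimal (· ∈ transversals V k t 𝒜) T}

theorem minimalTransversals_subset : minimalTransversals V k t 𝒜 ⊆ transversals V k t 𝒜 :=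
  fun _ hT ↦ hT.prop

theorem exists_mem_minimalTransversals_subset (hT : T ∈ transversals V k t 𝒜) :
    ∃ B ∈ minimalTransversals V k t 𝒜, B ⊆ T := by
  obtain ⟨B, hBT, hB⟩ := exists_minimal_le_of_wellFoundedLT (· ∈ transversals V k t 𝒜) T hT
  exact ⟨B, hB, hBT⟩

theorem IsTIntersecting.mono {ℬ : Set (Finset α)} (hℬ : IsTIntersecting t ℬ) (h : 𝒜 ⊆ ℬ) :
    IsTIntersecting t 𝒜 :=
  fun A hA B hB ↦ hℬ A (h hA) B (h hB)

theorem IsTIntersecting.insert (h𝒜 : IsTIntersecting t 𝒜) (hH : t ≤ #H)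
    (h : ∀ A ∈ 𝒜, t ≤ #(H ∩ A)) : IsTIntersecting t (insert H 𝒜) := by
  rintro A (rfl | hA) B (rfl | hB)
  · rwa [inter_self]
  · exact h B hB
  · rw [inter_comm]
    exact h A hA
  · exact h𝒜 A hA B hB

theorem IsTIntersecting.subset_transversals (h𝒜 : IsTIntersecting t 𝒜)
    (h : 𝒜 ⊆ uniformFamily V k) : 𝒜 ⊆ transversals V k t 𝒜 :=
  fun A hA ↦ ⟨(h hA).1, (h hA).2.le, h𝒜 A hA⟩

theorem le_card_of_mem_transversals (hne : 𝒜.Nonempty) (hT : T ∈ transversals V k t 𝒜) :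
    t ≤ #T := by
  obtain ⟨A, hA⟩ := hne
  exact (hT.2.2 A hA).trans (card_le_card inter_subset_left)

theorem IsSaturated.mem_of_transversal_subset (hsat : IsSaturated V k t 𝒜) (hne : 𝒜.Nonempty)
    (hT : T ∈ transversals V k t 𝒜) (hH : H ∈ uniformFamily V k) (hTH : T ⊆ H) : H ∈ 𝒜 := by
  have hH_inter : ∀ A ∈ 𝒜, t ≤ #(H ∩ A) := fun A hA ↦
    (hT.2.2 A hA).trans (card_le_card (inter_subset_inter_right hTH))
  have hH_card : t ≤ #H := (le_card_of_mem_transversals hne hT).trans (card_le_card hTH)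
  exact hsat.mem_of_prop_insert
    ⟨Set.insert_subset hH hsat.prop.1, hsat.prop.2.insert hH_card hH_inter⟩

theorem exists_superset_mem_uniformFamily_card_inter_le {s : ℕ} (hT : ↑T ⊆ V) (hTk : #T ≤ k)
    (hT' : ↑T' ⊆ V) (hs : #(T ∩ T') ≤ s) (hsT' : s ≤ #T') (hV : k + #T' ≤ V.encard + s) :
    ∃ H ∈ uniformFamily V k, T ⊆ H ∧ #(H ∩ T') ≤ s := by
  obtain ⟨U, hTU, hUT', rfl⟩ := exists_subsuperset_card_eq inter_subset_right hs hsT'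
  let W : Set α := V \ T' ∪ U
  have hWV : W ⊆ V := Set.union_subset Set.sdiff_subset ((coe_subset.2 hUT').trans hT')
  have hTW : ↑T ⊆ W := fun x hx ↦ by
    by_cases hxT' : x ∈ T'
    · exact .inr (hTU (mem_inter.2 ⟨hx, hxT'⟩))
    · exact .inl ⟨hT hx, hxT'⟩
  have hW_card : W.encard + #T' = V.encard + #U := by
    have hdisj : Disjoint (V \ T') (U : Set α) :=
      Set.disjoint_sdiff_left.mono_right (coe_subset.2 hUT')
    rw [Set.encard_union_eq hdisj, add_right_comm, ← Set.encard_coe_eq_coe_finsetCard T',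
      Set.encard_sdiff_add_encard_of_subset hT', Set.encard_coe_eq_coe_finsetCard]
  have hkW : k ≤ W.encard :=
    (ENat.add_le_add_iff_right (ENat.natCast_ne_top #T')).1 (hV.trans_eq hW_card.symm)
  obtain ⟨H, hTH, hHW, hHk⟩ := Set.exists_superset_subset_encard_eq hTW (by simpa using hTk) hkW
  lift H to Finset α using Set.finite_of_encard_eq_coe hHk
  refine ⟨H, ⟨hHW.trans hWV, by simpa using hHk⟩, coe_subset.1 hTH, card_le_card fun x hx ↦ ?_⟩
  obtain ⟨hxH, hxT'⟩ := mem_inter.1 hx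
  exact (hHW hxH).resolve_left fun hxV ↦ hxV.2 hxT'

theorem IsSaturated.isTIntersecting_transversals (hsat : IsSaturated V k t 𝒜) (hne : 𝒜.Nonempty)
    (hV : 2 * k ≤ V.encard + t) : IsTIntersecting t (transversals V k t 𝒜) := by
  intro T hT T' hT'
  obtain hT'k | hT'k := hT'.2.1.eq_or_lt
  · exact hT.2.2 T' (hsat.mem_of_transversal_subset hne hT' ⟨hT'.1, hT'k⟩ Subset.rfl)
  by_contra! hlt
  have htT' : t ≤ #T' := le_card_of_mem_transversals hne hT'
  obtain ⟨s, rfl⟩ : ∃ s, t = s + 1 := Nat.exists_eq_add_one.2 (by lia)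
  have hroom : k + #T' ≤ V.encard + s := by
    refine (ENat.add_le_add_iff_right ENat.one_ne_top).1 ?_
    calc (k + #T' + 1 : ℕ∞) ≤ 2 * k := by norm_cast; lia
      _ ≤ V.encard + (s + 1 : ℕ) := hV
      _ = V.encard + s + 1 := by push_cast; rw [add_assoc]
  obtain ⟨H, hH, hTH, hHT'⟩ := exists_superset_mem_uniformFamily_card_inter_le hT.1 hT.2.1 hT'.1
    (Nat.lt_succ_iff.1 hlt) (by lia) hroom
  have hH_mem : H ∈ 𝒜 := hsat.mem_of_transversal_subset hne hT hH hTH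
  have hT'H : s + 1 ≤ #(T' ∩ H) := hT'.2.2 H hH_mem
  rw [inter_comm] at hT'H
  lia

theorem IsSaturated.eq_setOf_exists_minimalTransversals_subset (hsat : IsSaturated V k t 𝒜)
    (hne : 𝒜.Nonempty) :
    𝒜 = {H ∈ uniformFamily V k | ∃ B ∈ minimalTransversals V k t 𝒜, B ⊆ H} := by
  obtain ⟨h𝒜, hint⟩ := hsat.prop
  ext H
  constructor
  · exact fun hH ↦
      ⟨h𝒜 hH, exists_mem_minimalTransversals_subset (hint.subset_transversals h𝒜 hH)⟩
  · rintro ⟨hH, B, hB, hBH⟩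
    exact hsat.mem_of_transversal_subset hne (minimalTransversals_subset hB) hH hBH

theorem stmt14_general (hne : 𝒜.Nonempty) (hsat : IsSaturated V k t 𝒜)
    (hV : 2 * k ≤ V.encard + t) :
    (IsTIntersecting t (minimalTransversals V k t 𝒜) ∧
      IsAntichain (· ⊆ ·) (minimalTransversals V k t 𝒜)) ∧
    𝒜 = {H ∈ uniformFamily V k | ∃ B ∈ minimalTransversals V k t 𝒜, B ⊆ H} :=
  ⟨⟨(hsat.isTIntersecting_transversals hne hV).mono minimalTransversals_subset,
    setOfPred_minimal_antichain _⟩, hsat.eq_setOf_exists_minimalTransversals_subset hne⟩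

end SetFamily

theorem coe_ksets (n k : ℕ) : (ksets n k : Set (Finset ℕ)) = uniformFamily (ground n) k := by
  ext A
  simp [ksets, uniformFamily, mem_powersetCard]

theorem coe_tbasis (n k t : ℕ) (F : Finset (Finset ℕ)) :
    (tbasis n k t F : Set (Finset ℕ)) = minimalTransversals (ground n) k t F := by
  have mem_ttransv_iff (T : Finset ℕ) :
      T ∈ ttransv n k t F ↔ T ∈ transversals (ground n) k t F := by
    simp [ttransv, transversals]
  ext T
  simp only [tbasis, coe_filter, minimalTransversals, Set.mem_ofPred_eq, minimal_iff,
    mem_ttransv_iff, eq_comm]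

theorem encard_ground (n : ℕ) : (ground n : Set ℕ).encard = n := by
  rw [Set.encard_coe_eq_coe_finsetCard, ground, Nat.card_Icc, Nat.add_sub_cancel]

theorem isSaturated_coe {n k t : ℕ} {F : Finset (Finset ℕ)} (hF : F ⊆ ksets n k)
    (hint : tIntersecting t F)
    (hsat : ∀ F' : Finset (Finset ℕ), F ⊆ F' → F' ⊆ ksets n k → tIntersecting t F' → F' = F) :
    IsSaturated (ground n : Set ℕ) k t F := by
  rw [IsSaturated, ← coe_ksets]
  refine ⟨⟨coe_subset.2 hF, hint⟩, fun ℬ ⟨hℬ, hℬint⟩ hFℬ ↦ ?_⟩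
  lift ℬ to Finset (Finset ℕ) using (ksets n k).finite_toSet.subset hℬ
  exact (congrArg _ (hsat ℬ (coe_subset.1 hFℬ) (coe_subset.1 hℬ) hℬint)).le

theorem stmt14 (n k t : ℕ) (ht : 1 ≤ t) (hk : t < k) (hn : 2 * k ≤ n)
    (F : Finset (Finset ℕ)) (hF : F ⊆ ksets n k) (hFne : F.Nonempty)
    (hint : tIntersecting t F)
    (hsat : ∀ F' : Finset (Finset ℕ), F ⊆ F' → F' ⊆ ksets n k →
      tIntersecting t F' → F' = F) :
    (tIntersecting t (tbasis n k t F) ∧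
      IsAntichain (· ⊆ ·) ((tbasis n k t F : Finset (Finset ℕ)) : Set (Finset ℕ))) ∧
    F = (ksets n k).filter fun H => ∃ b ∈ tbasis n k t F, b ⊆ H := by
  have h := stmt14_general hFne (isSaturated_coe hF hint hsat)
    (by rw [encard_ground]; exact_mod_cast le_add_right hn)
  rw [← coe_tbasis, ← coe_ksets] at h
  exact ⟨h.1, coe_injective (h.2.trans (coe_filter _ _).symm)⟩
end

section
/- Suppose A, B ⊆ 2^{[n]} are nonempty cross-Sperner families. Then |I(A, B)| ≤ 2^n − |A| − |B| − 1. -/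
open Finset

/-!
An intersection `a ∩ b` lies below both `a` and `b`, so if it were a member of `A` or of `B` it
would be comparable to a member of the other family. Hence `A`, `B` and `I(A, B)` are pairwise
disjoint subfamilies of `2^[n]`. They all miss `[n]`: it contains every member of both families, so
it is in neither, and `a ∩ b = [n]` would force `a ⊆ [n] ⊆ b`. The same count
works below an element `s` of a meet-semilattice, with `⊓` for `∩` and `s` for `[n]`.
-/

/-- Every element of `A` is incomparable to every element of `B`: the cross-Sperner property with
inclusion replaced by an arbitrary order. -/
def CrossIncomparable {α : Type*} [LE α] (A B : Finset α) : Prop :=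
  ∀ a ∈ A, ∀ b ∈ B, IncompRel (· ≤ ·) a b

namespace CrossIncomparable

variable {α : Type*} {A B : Finset α} {s : α}

theorem symm [LE α] (h : CrossIncomparable A B) : CrossIncomparable B A :=
  fun b hb a ha => (h a ha b hb).symm

theorem disjoint [Preorder α] (h : CrossIncomparable A B) : Disjoint A B :=
  Finset.disjoint_left.2 fun x hxA hxB => (h x hxA x hxB).1 le_rfl

theorem notMem_left_of_mem_upperBounds [LE α] (h : CrossIncomparable A B) (hB : B.Nonempty)
    (hs : s ∈ upperBounds (B : Set α)) : s ∉ A := by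
  obtain ⟨b, hb⟩ := hB
  exact fun hsA => (h s hsA b hb).2 (hs hb)

section SemilatticeInf

open scoped FinsetFamily

variable [SemilatticeInf α] [DecidableEq α]

theorem disjoint_left_infs (h : CrossIncomparable A B) : Disjoint A (A ⊼ B) := by
  refine Finset.disjoint_right.2 fun x hx hxA => ?_
  obtain ⟨a, -, b, hb, rfl⟩ := mem_infs.1 hx
  exact (h (a ⊓ b) hxA b hb).1 inf_le_right

theorem disjoint_union_infs (h : CrossIncomparable A B) : Disjoint (A ∪ B) (A ⊼ B) :=
  disjoint_union_left.2 ⟨h.disjoint_left_infs, infs_comm B A ▸ h.symm.disjoint_left_infs⟩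

theorem notMem_infs_of_mem_upperBounds (h : CrossIncomparable A B)
    (hs : s ∈ upperBounds (A : Set α)) : s ∉ A ⊼ B := by
  intro hmem
  obtain ⟨a, ha, b, hb, rfl⟩ := mem_infs.1 hmem
  exact (h a ha b hb).1 ((hs ha).trans inf_le_right)

theorem notMem_union_infs_of_mem_upperBounds (h : CrossIncomparable A B) (hA : A.Nonempty)
    (hB : B.Nonempty) (hsA : s ∈ upperBounds (A : Set α)) (hsB : s ∈ upperBounds (B : Set α)) :
    s ∉ A ∪ B ∪ A ⊼ B := by
  simp only [mem_union, not_or]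
  exact ⟨⟨h.notMem_left_of_mem_upperBounds hB hsB, h.symm.notMem_left_of_mem_upperBounds hA hsA⟩,
    h.notMem_infs_of_mem_upperBounds hsA⟩

end SemilatticeInf

end CrossIncomparable

open scoped FinsetFamily in
theorem stmt18_general {α : Type*} [SemilatticeInf α] [LocallyFiniteOrderBot α] [DecidableEq α]
    {s : α} {A B : Finset α} (hA : A ⊆ Iic s) (hB : B ⊆ Iic s) (hAne : A.Nonempty)
    (hBne : B.Nonempty) (h : CrossIncomparable A B) :
    (#(A ⊼ B) : ℤ) ≤ #(Iic s) - #A - #B - 1 := by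
  have hsA : s ∈ upperBounds (A : Set α) := fun _ ha => mem_Iic.1 (hA ha)
  have hsB : s ∈ upperBounds (B : Set α) := fun _ hb => mem_Iic.1 (hB hb)
  have hinfs : A ⊼ B ⊆ Iic s :=
    infs_subset_iff.2 fun a ha b _ => mem_Iic.2 (inf_le_left.trans (hsA ha))
  have hcard : #A + #B + #(A ⊼ B) + 1 ≤ #(Iic s) :=
    calc #A + #B + #(A ⊼ B) + 1 = #(insert s (A ∪ B ∪ A ⊼ B)) := by
          rw [card_insert_of_notMem (h.notMem_union_infs_of_mem_upperBounds hAne hBne hsA hsB),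
            card_union_of_disjoint h.disjoint_union_infs, card_union_of_disjoint h.disjoint]
      _ ≤ #(Iic s) := card_le_card <|
          insert_subset (mem_Iic.2 le_rfl) (union_subset (union_subset hA hB) hinfs)
  lia

theorem crossSperner_iff_crossIncomparable {A B : Finset (Finset ℕ)} :
    crossSperner A B ↔ CrossIncomparable A B :=
  Iff.rfl

open scoped FinsetFamily in
theorem meet_eq_infs (A B : Finset (Finset ℕ)) : meet A B = A ⊼ B :=
  rfl

theorem card_ground (n : ℕ) : #(ground n) = n := by
  rw [ground, Nat.card_Icc, Nat.add_sub_cancel]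

theorem stmt18 (n : ℕ) (hn : 1 ≤ n)
    (A B : Finset (Finset ℕ)) (hA : A ⊆ (ground n).powerset)
    (hB : B ⊆ (ground n).powerset)
    (hAne : A.Nonempty) (hBne : B.Nonempty) (hcs : crossSperner A B) :
    ((meet A B).card : ℤ) ≤ 2 ^ n - A.card - B.card - 1 := by
  rw [← Iic_eq_powerset] at hA hB
  simpa only [meet_eq_infs, card_Iic_finset, card_ground, Nat.cast_pow, Nat.cast_ofNat] using
    stmt18_general hA hB hAne hBne (crossSperner_iff_crossIncomparable.1 hcs)
end
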